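/- Fix 1 < p < ∞ and D > 0, and set π_p = 2π / (p · sin(π/p)). Let μ_p(0,D) denote the infimum of (∫_{-D/2}^{D/2} |φ′(s)|^p ds)/(∫_{-D/2}^{D/2} |φ(s)|^p ds) over all Lipschitz functions φ : [-D/2, D/2] → ℝ that are not identically zero and satisfy ∫_{-D/2}^{D/2} |φ(s)|^{p-2} φ(s) ds = 0, where φ′ is the almost-everywhere derivative. Then μ_p(0,D) = (p-1) (π_p / D)^p. -/

import Mathlib

/-- The odd power function `sgnPow q x = sign x * |x| ^ q` (with value `0` at `0`);
for `q = p - 1` this is the function usually written `|x|^{p-2} x`. -/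
noncomputable def sgnPow (q x : ℝ) : ℝ := Real.sign x * |x| ^ q

/-- The first nonzero Neumann eigenvalue `μ_p(κ, D)` of the one-dimensional weighted
`p`-Laplacian on `[-D/2, D/2]`, defined variationally as the infimum of the Rayleigh
quotient over Lipschitz functions, not identically zero, with vanishing weighted
`|φ|^{p-2} φ`-mean.  (Here `deriv φ` is the a.e. derivative of `φ`.) -/
noncomputable def rayleighNeumann (p κ D : ℝ) : ℝ :=
  sInf { r : ℝ | ∃ φ : ℝ → ℝ,
    (∃ K : NNReal, LipschitzOnWith K φ (Set.Icc (-(D / 2)) (D / 2))) ∧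
    ¬ (∀ s ∈ Set.Icc (-(D / 2)) (D / 2), φ s = 0) ∧
    (∫ s in (-(D / 2))..(D / 2), sgnPow (p - 1) (φ s) * Real.exp (-κ * s ^ 2 / 2)) = 0 ∧
    r = (∫ s in (-(D / 2))..(D / 2), |deriv φ s| ^ p * Real.exp (-κ * s ^ 2 / 2)) /
        (∫ s in (-(D / 2))..(D / 2), |φ s| ^ p * Real.exp (-κ * s ^ 2 / 2)) }

/-!
Let `c` be the midpoint value of an admissible `φ`. The tangent inequality for the convex function
`|x| ^ p` and the mean condition give `∫ |φ| ^ p ≤ ∫ |φ - c| ^ p`, so the lower bound reduces to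
functions `ψ` vanishing at the midpoint, and on each half it is a Picone argument: the generalized
cotangent flux `W` of `sin_p (ω s)` solves `W' = -(p - 1) (ω ^ p + |W| ^ (p / (p - 1)))`, hence
Young's inequality yields `(W |ψ| ^ p)' + (p - 1) ω ^ p |ψ| ^ p ≤ |ψ'| ^ p`, and the pole of `W` at
the zero of `ψ` is avoided by a small shift. This works for `ω` below `π_p / D`, because the first
positive zero of `cos_p` is `∫₀¹ (1 - s ^ p) ^ (-1 / p) ds = π_p / 2`, a beta integral evaluated by
the reflection formula. The function `sin_p (π_p s / D)` is odd and attains the bound.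
-/

open Real Set Filter Topology MeasureTheory

section OddPower

lemma sgnPow_of_pos (q : ℝ) {x : ℝ} (hx : 0 < x) : sgnPow q x = x ^ q := by
  rw [sgnPow, sign_of_pos hx, abs_of_pos hx, one_mul]

lemma sgnPow_neg (q x : ℝ) : sgnPow q (-x) = -sgnPow q x := by
  rw [sgnPow, sgnPow, Real.sign_neg, abs_neg, neg_mul]

lemma sgnPow_eq_abs_rpow_mul (q x : ℝ) : sgnPow q x = |x| ^ (q - 1) * x := by
  have of_pos : ∀ y : ℝ, 0 < y → sgnPow q y = |y| ^ (q - 1) * y := fun y hy => by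
    rw [sgnPow_of_pos q hy, abs_of_pos hy, ← rpow_add_one hy.ne', sub_add_cancel]
  obtain hx | rfl | hx := lt_trichotomy x 0
  · simpa [sgnPow_neg] using of_pos (-x) (neg_pos.2 hx)
  · simp [sgnPow]
  · exact of_pos x hx

lemma sgnPow_mul_self {q : ℝ} (hq : q + 1 ≠ 0) (x : ℝ) : sgnPow q x * x = |x| ^ (q + 1) := by
  obtain rfl | hx := eq_or_ne x 0
  · simp [zero_rpow hq]
  · rw [sgnPow_eq_abs_rpow_mul, mul_assoc, ← abs_mul_abs_self, ← mul_assoc,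
      ← rpow_add_one (abs_ne_zero.2 hx), ← rpow_add_one (abs_ne_zero.2 hx), sub_add_cancel]

lemma abs_sgnPow {q : ℝ} (hq : q ≠ 0) (x : ℝ) : |sgnPow q x| = |x| ^ q := by
  obtain rfl | hx := eq_or_ne x 0
  · simp [sgnPow, zero_rpow hq]
  · rw [sgnPow_eq_abs_rpow_mul, abs_mul, abs_of_nonneg (by positivity),
      ← rpow_add_one (abs_ne_zero.2 hx), sub_add_cancel]

lemma hasDerivAt_abs_rpow_sgnPow {p : ℝ} (hp : 1 < p) (x : ℝ) :
    HasDerivAt (fun y : ℝ => |y| ^ p) (p * sgnPow (p - 1) x) x := by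
  have h := hasDerivAt_abs_rpow x hp
  rwa [mul_assoc, show p - 2 = p - 1 - 1 by ring, ← sgnPow_eq_abs_rpow_mul] at h

lemma continuous_sgnPow {q : ℝ} (hq : 0 < q) : Continuous (sgnPow q) := by
  have hq1 : 1 < q + 1 := by linarith
  have h : sgnPow q = fun x => (q + 1)⁻¹ * deriv (fun y : ℝ => ‖y‖ ^ (q + 1)) x := by
    ext x
    simp only [norm_eq_abs, (hasDerivAt_abs_rpow_sgnPow hq1 x).deriv, add_sub_cancel_right]
    field_simp
  rw [h]
  exact continuous_const.mul ((contDiff_norm_rpow hq1).continuous_deriv le_rfl)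

lemma hasDerivAt_sgnPow (q : ℝ) {x : ℝ} (hx : x ≠ 0) :
    HasDerivAt (sgnPow q) (q * |x| ^ (q - 1)) x := by
  have of_pos : ∀ y : ℝ, 0 < y → HasDerivAt (sgnPow q) (q * |y| ^ (q - 1)) y := fun y hy => by
    rw [abs_of_pos hy]
    exact (hasDerivAt_rpow_const (Or.inl hy.ne')).congr_of_eventuallyEq <|
      (eventually_gt_nhds hy).mono fun z hz => sgnPow_of_pos q hz
  obtain hx | hx := hx.lt_or_gt
  · have h := (of_pos (-x) (neg_pos.2 hx)).scomp x (hasDerivAt_neg x)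
    simpa [Function.comp_def, sgnPow_neg] using h.fun_neg
  · exact of_pos x hx

lemma young_mul_sgnPow {p q : ℝ} (hpq : p.HolderConjugate q) (w x y : ℝ) :
    p * (w * sgnPow (p - 1) x) * y ≤ (p - 1) * (|w| ^ q * |x| ^ p) + |y| ^ p := by
  have hpow : |w * sgnPow (p - 1) x| ^ q = |w| ^ q * |x| ^ p := by
    rw [abs_mul, abs_sgnPow hpq.sub_one_ne_zero, mul_rpow (abs_nonneg _) (by positivity),
      ← rpow_mul (abs_nonneg _), hpq.sub_one_mul_conj]
  calc p * (w * sgnPow (p - 1) x) * y = p * (y * (w * sgnPow (p - 1) x)) := by ring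
    _ ≤ p * (|y| ^ p / p + |w * sgnPow (p - 1) x| ^ q / q) :=
        mul_le_mul_of_nonneg_left (young_inequality _ _ hpq) hpq.nonneg
    _ = (p - 1) * (|w| ^ q * |x| ^ p) + |y| ^ p := by
        rw [hpow, ← hpq.div_conj_eq_sub_one]
        field_simp [hpq.ne_zero]
        ring

lemma abs_rpow_sub_le_abs_sub_rpow {p : ℝ} (hp : 1 < p) (x c : ℝ) :
    |x| ^ p - p * c * sgnPow (p - 1) x ≤ |x - c| ^ p := by
  have tangent := young_mul_sgnPow (HolderConjugate.conjExponent hp) 1 x (x - c)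
  have hself := sgnPow_mul_self (q := p - 1) (by linarith) x
  simp only [abs_one, one_rpow, one_mul, sub_add_cancel] at tangent hself
  linear_combination tangent - p * hself

end OddPower

lemma integral_abs_rpow_le_integral_abs_sub_rpow {α : Type*} [MeasurableSpace α] {μ : Measure α}
    {p : ℝ} (hp : 1 < p) {f : α → ℝ} {c : ℝ} (hf : Integrable (fun s => |f s| ^ p) μ)
    (hf' : Integrable (fun s => sgnPow (p - 1) (f s)) μ)
    (hfc : Integrable (fun s => |f s - c| ^ p) μ) (hmean : ∫ s, sgnPow (p - 1) (f s) ∂μ = 0) :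
    ∫ s, |f s| ^ p ∂μ ≤ ∫ s, |f s - c| ^ p ∂μ :=
  calc ∫ s, |f s| ^ p ∂μ = ∫ s, |f s| ^ p - p * c * sgnPow (p - 1) (f s) ∂μ := by
        rw [integral_sub hf (hf'.const_mul _), integral_const_mul, hmean, mul_zero, sub_zero]
    _ ≤ ∫ s, |f s - c| ^ p ∂μ :=
        integral_mono (hf.sub (hf'.const_mul _)) hfc fun s =>
          abs_rpow_sub_le_abs_sub_rpow hp (f s) c

section BetaIntegral

lemma ofReal_rpow_mul_one_sub_rpow (u v : ℝ) {x : ℝ} (hx : x ∈ Icc (0 : ℝ) 1) :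
    ((x ^ (u - 1) * (1 - x) ^ (v - 1) : ℝ) : ℂ) =
      (x : ℂ) ^ ((u : ℂ) - 1) * (1 - (x : ℂ)) ^ ((v : ℂ) - 1) := by
  rw [Complex.ofReal_mul, Complex.ofReal_cpow hx.1, Complex.ofReal_cpow (sub_nonneg.2 hx.2)]
  push_cast
  rfl

lemma intervalIntegrable_rpow_mul_one_sub_rpow {u v : ℝ} (hu : 0 < u) (hv : 0 < v) :
    IntervalIntegrable (fun x : ℝ => x ^ (u - 1) * (1 - x) ^ (v - 1)) volume 0 1 := by
  have hconv := Complex.betaIntegral_convergent (u := u) (v := v) (by simpa) (by simpa)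
  rw [intervalIntegrable_iff_integrableOn_Icc_of_le zero_le_one] at hconv ⊢
  exact (hconv.congr_fun (fun x hx => (ofReal_rpow_mul_one_sub_rpow u v hx).symm)
    measurableSet_Icc).re

lemma integral_rpow_mul_one_sub_rpow {u v : ℝ} (hu : 0 < u) (hv : 0 < v) :
    ∫ x in (0 : ℝ)..1, x ^ (u - 1) * (1 - x) ^ (v - 1) = ProbabilityTheory.beta u v := by
  rw [ProbabilityTheory.beta_eq_betaIntegralReal u v hu hv, Complex.betaIntegral,
    ← intervalIntegral.integral_congr fun x hx =>
      ofReal_rpow_mul_one_sub_rpow u v (uIcc_of_le (zero_le_one' ℝ) ▸ hx),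
    intervalIntegral.integral_ofReal, Complex.ofReal_re]

lemma beta_one_sub (u : ℝ) : ProbabilityTheory.beta u (1 - u) = π / sin (π * u) := by
  rw [ProbabilityTheory.beta, add_sub_cancel, Gamma_one, div_one, Gamma_mul_Gamma_one_sub]

lemma image_rpow_Ioo_zero_one {r : ℝ} (hr : 0 < r) :
    (fun x : ℝ => x ^ r) '' Ioo 0 1 = Ioo 0 1 := by
  have mapsTo : ∀ {t : ℝ}, 0 < t → ∀ x ∈ Ioo (0 : ℝ) 1, x ^ t ∈ Ioo (0 : ℝ) 1 := fun ht x hx =>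
    ⟨rpow_pos_of_pos hx.1 _, rpow_lt_one hx.1.le hx.2 ht⟩
  refine Subset.antisymm (image_subset_iff.2 (mapsTo hr)) fun y hy => ?_
  exact ⟨y ^ r⁻¹, mapsTo (inv_pos.2 hr) y hy, rpow_inv_rpow hy.1.le hr.ne'⟩

lemma injOn_rpow_Ioo_zero_one {r : ℝ} (hr : r ≠ 0) : InjOn (fun x : ℝ => x ^ r) (Ioo 0 1) :=
  (rpow_left_injOn hr).mono fun _ hx => hx.1.le

lemma hasDerivWithinAt_rpow_Ioo_zero_one (r : ℝ) :
    ∀ x ∈ Ioo (0 : ℝ) 1, HasDerivWithinAt (fun x => x ^ r) (r * x ^ (r - 1)) (Ioo 0 1) x :=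
  fun _ hx => (hasDerivAt_rpow_const (Or.inl hx.1.ne')).hasDerivWithinAt

end BetaIntegral

section GeneralizedTrigonometry

/-- The constant `π_p = 2π / (p sin (π / p))`; half of it is the first zero of the generalized
cosine `pCos p`. -/
noncomputable def pPi (p : ℝ) : ℝ := 2 * π / (p * sin (π / p))

/-- The density of the generalized arcsine on `(-1, 1)`. It is continued by `1` so that its
primitive is an expanding bijection of the whole real line, whose inverse is then total. -/
noncomputable def pArcsinDensity (p s : ℝ) : ℝ :=
  if |s| < 1 then (1 - |s| ^ p) ^ (-p⁻¹) else 1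

/-- The generalized arcsine `t ↦ ∫₀ᵗ (1 - |s| ^ p) ^ (-1 / p) ds` on `[-1, 1]`, continued to the
real line with slope `1`. -/
noncomputable def pArcsin (p t : ℝ) : ℝ := ∫ s in (0 : ℝ)..t, pArcsinDensity p s

/-- The generalized sine `sin_p` on `[-π_p / 2, π_p / 2]`, defined as the inverse of `pArcsin p`.
Outside this interval it is continued with slope `1`, not periodically. -/
noncomputable def pSin (p : ℝ) : ℝ → ℝ := Function.invFun (pArcsin p)

/-- The generalized cosine `cos_p = sin_p'` on `[-π_p / 2, π_p / 2]`, given by the identity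
`|sin_p| ^ p + cos_p ^ p = 1`. It is meaningful only on this interval, since the base of the power
is negative outside. -/
noncomputable def pCos (p t : ℝ) : ℝ := (1 - |pSin p t| ^ p) ^ p⁻¹

variable {p : ℝ}

lemma pPi_pos (hp : 1 < p) : 0 < pPi p := by
  have hsin : 0 < sin (π / p) :=
    sin_pos_of_pos_of_lt_pi (div_pos pi_pos (by linarith)) (div_lt_self pi_pos hp)
  unfold pPi
  positivity

lemma pArcsinDensity_neg (p s : ℝ) : pArcsinDensity p (-s) = pArcsinDensity p s := by
  simp only [pArcsinDensity, abs_neg]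

lemma one_le_pArcsinDensity (hp : 0 < p) (s : ℝ) : 1 ≤ pArcsinDensity p s := by
  unfold pArcsinDensity
  split_ifs with hs
  · have hlt : |s| ^ p < 1 := rpow_lt_one (abs_nonneg s) hs hp
    have hnonneg : 0 ≤ |s| ^ p := by positivity
    exact one_le_rpow_of_pos_of_le_one_of_nonpos (by linarith) (by linarith)
      (by simpa using hp.le)
  · exact le_rfl

-- The substitution `s = x ^ (1 / p)` turns the density into the beta integrand with parameters
-- `1 / p` and `1 - 1 / p`.
lemma abs_deriv_smul_pArcsinDensity_rpow_inv (hp : 0 < p) {x : ℝ} (hx : x ∈ Ioo (0 : ℝ) 1) :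
    |p⁻¹ * x ^ (p⁻¹ - 1)| • pArcsinDensity p (x ^ p⁻¹) =
      p⁻¹ * (x ^ (p⁻¹ - 1) * (1 - x) ^ (1 - p⁻¹ - 1)) := by
  have hx0 : 0 < x := hx.1
  have hlt : x ^ p⁻¹ < 1 := rpow_lt_one hx0.le hx.2 (inv_pos.2 hp)
  rw [abs_of_pos (by positivity), pArcsinDensity, abs_of_pos (by positivity), if_pos hlt,
    rpow_inv_rpow hx0.le hp.ne', smul_eq_mul, mul_assoc, sub_sub_cancel_left]

lemma intervalIntegrable_pArcsinDensity_zero_one (hp : 1 < p) :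
    IntervalIntegrable (pArcsinDensity p) volume 0 1 := by
  have hp0 : 0 < p := by linarith
  have hbeta := intervalIntegrable_rpow_mul_one_sub_rpow (inv_pos.2 hp0)
    (sub_pos.2 (inv_lt_one_of_one_lt₀ hp))
  rw [intervalIntegrable_iff_integrableOn_Ioo_of_le zero_le_one] at hbeta ⊢
  rw [← image_rpow_Ioo_zero_one (inv_pos.2 hp0),
    integrableOn_image_iff_integrableOn_abs_deriv_smul measurableSet_Ioo
      (hasDerivWithinAt_rpow_Ioo_zero_one p⁻¹) (injOn_rpow_Ioo_zero_one (inv_ne_zero hp0.ne'))]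
  exact IntegrableOn.congr_fun (hbeta.const_mul p⁻¹)
    (fun x hx => (abs_deriv_smul_pArcsinDensity_rpow_inv hp0 hx).symm) measurableSet_Ioo

lemma pArcsin_one (hp : 1 < p) : pArcsin p 1 = pPi p / 2 := by
  have hp0 : 0 < p := by linarith
  have hbeta := integral_rpow_mul_one_sub_rpow (inv_pos.2 hp0)
    (sub_pos.2 (inv_lt_one_of_one_lt₀ hp))
  rw [intervalIntegral.integral_of_le zero_le_one, integral_Ioc_eq_integral_Ioo] at hbeta
  rw [pArcsin, intervalIntegral.integral_of_le zero_le_one, integral_Ioc_eq_integral_Ioo,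
    ← image_rpow_Ioo_zero_one (inv_pos.2 hp0),
    integral_image_eq_integral_abs_deriv_smul measurableSet_Ioo
      (hasDerivWithinAt_rpow_Ioo_zero_one p⁻¹) (injOn_rpow_Ioo_zero_one (inv_ne_zero hp0.ne')),
    setIntegral_congr_fun measurableSet_Ioo
      fun x hx => abs_deriv_smul_pArcsinDensity_rpow_inv hp0 hx,
    integral_const_mul, hbeta, beta_one_sub, pPi, ← div_eq_mul_inv]
  field_simp

lemma intervalIntegrable_pArcsinDensity (hp : 1 < p) (a b : ℝ) :
    IntervalIntegrable (pArcsinDensity p) volume a b := by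
  refine intervalIntegrable_of_even (fun s => (pArcsinDensity_neg p s).symm) fun x hx => ?_
  have hone : IntervalIntegrable (pArcsinDensity p) volume 1 (max x 1) := by
    refine (intervalIntegrable_const (c := (1 : ℝ))).congr fun s hs => ?_
    rw [uIoc_of_le (le_max_right x 1)] at hs
    rw [pArcsinDensity, if_neg (hs.1.le.trans (le_abs_self s)).not_gt]
  refine ((intervalIntegrable_pArcsinDensity_zero_one hp).trans hone).mono_set ?_
  rw [uIcc_of_le hx.le, uIcc_of_le (hx.le.trans (le_max_left x 1))]
  exact Icc_subset_Icc_right (le_max_left x 1)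

lemma pArcsin_neg (p t : ℝ) : pArcsin p (-t) = -pArcsin p t := by
  have hcomp := intervalIntegral.integral_comp_neg (a := 0) (b := t) (pArcsinDensity p)
  simp only [pArcsinDensity_neg, neg_zero] at hcomp
  rw [pArcsin, pArcsin, hcomp, intervalIntegral.integral_symm]

lemma sub_le_pArcsin_sub (hp : 1 < p) {a b : ℝ} (hab : a ≤ b) :
    b - a ≤ pArcsin p b - pArcsin p a := by
  have hint := intervalIntegrable_pArcsinDensity hp
  rw [pArcsin, pArcsin, intervalIntegral.integral_interval_sub_left (hint _ _) (hint _ _)]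
  simpa using intervalIntegral.integral_mono_on hab (intervalIntegrable_const (c := (1 : ℝ)))
    (hint _ _) fun s _ => one_le_pArcsinDensity (by linarith : 0 < p) s

lemma strictMono_pArcsin (hp : 1 < p) : StrictMono (pArcsin p) :=
  fun a b hab => by linarith [sub_le_pArcsin_sub hp hab.le]

lemma surjective_pArcsin (hp : 1 < p) : Function.Surjective (pArcsin p) := by
  have h0 : pArcsin p 0 = 0 := intervalIntegral.integral_same
  have hcont : Continuous (pArcsin p) :=
    intervalIntegral.continuous_primitive (intervalIntegrable_pArcsinDensity hp) 0
  refine hcont.surjective (tendsto_atTop_mono' _ ?_ tendsto_id)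
    (tendsto_atBot_mono' _ ?_ tendsto_id)
  · filter_upwards [eventually_ge_atTop 0] with t ht
    simpa [h0] using sub_le_pArcsin_sub hp ht
  · filter_upwards [eventually_le_atBot 0] with t ht
    simpa [h0] using sub_le_pArcsin_sub hp ht

lemma hasDerivAt_pArcsin (hp : 1 < p) {t : ℝ} (ht : |t| < 1) :
    HasDerivAt (pArcsin p) ((1 - |t| ^ p) ^ (-p⁻¹)) t := by
  have hlt : |t| ^ p < 1 := rpow_lt_one (abs_nonneg t) ht (by linarith)
  have heq : pArcsinDensity p =ᶠ[𝓝 t] fun s => (1 - |s| ^ p) ^ (-p⁻¹) :=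
    (continuous_abs.tendsto t).eventually_lt_const ht |>.mono fun s hs => if_pos hs
  have hcont : ContinuousAt (fun s : ℝ => (1 - |s| ^ p) ^ (-p⁻¹)) t :=
    (continuousAt_const.sub (continuous_abs.continuousAt.rpow_const
      (Or.inr (by linarith)))).rpow_const (Or.inl (sub_pos.2 hlt).ne')
  have hmeas : Measurable (pArcsinDensity p) :=
    Measurable.ite (measurableSet_lt (by fun_prop) (by fun_prop)) (by fun_prop) (by fun_prop)
  have hderiv := intervalIntegral.integral_hasDerivAt_right
    (intervalIntegrable_pArcsinDensity hp 0 t) hmeas.stronglyMeasurable.stronglyMeasurableAtFilter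
    (hcont.congr_of_eventuallyEq heq)
  rwa [heq.eq_of_nhds] at hderiv

lemma pArcsin_pSin (hp : 1 < p) (t : ℝ) : pArcsin p (pSin p t) = t :=
  Function.rightInverse_invFun (surjective_pArcsin hp) t

lemma pSin_pArcsin (hp : 1 < p) (t : ℝ) : pSin p (pArcsin p t) = t :=
  Function.leftInverse_invFun (strictMono_pArcsin hp).injective t

lemma strictMono_pSin (hp : 1 < p) : StrictMono (pSin p) := fun a b hab => by
  rwa [← (strictMono_pArcsin hp).lt_iff_lt, pArcsin_pSin hp, pArcsin_pSin hp]

lemma lipschitzWith_pSin (hp : 1 < p) : LipschitzWith 1 (pSin p) := by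
  refine LipschitzWith.of_le_add fun x y => ?_
  obtain hxy | hyx := le_total x y
  · linarith [(strictMono_pSin hp).monotone hxy, dist_nonneg (x := x) (y := y)]
  · have hle := sub_le_pArcsin_sub hp ((strictMono_pSin hp).monotone hyx)
    rw [pArcsin_pSin hp, pArcsin_pSin hp] at hle
    linarith [le_abs_self (x - y), Real.dist_eq x y]

lemma pSin_neg (hp : 1 < p) (t : ℝ) : pSin p (-t) = -pSin p t := by
  apply (strictMono_pArcsin hp).injective
  rw [pArcsin_neg, pArcsin_pSin hp, pArcsin_pSin hp]

lemma pSin_zero (hp : 1 < p) : pSin p 0 = 0 := by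
  simpa using self_eq_neg.1 (by simpa using pSin_neg hp 0)

lemma pSin_pPi_div_two (hp : 1 < p) : pSin p (pPi p / 2) = 1 := by
  rw [← pArcsin_one hp, pSin_pArcsin hp]

lemma abs_pSin_lt_one (hp : 1 < p) {t : ℝ} (ht : |t| < pPi p / 2) : |pSin p t| < 1 := by
  rw [abs_lt] at ht ⊢
  rw [← pSin_pPi_div_two hp, ← pSin_neg hp]
  exact ⟨strictMono_pSin hp ht.1, strictMono_pSin hp ht.2⟩

lemma one_sub_abs_pSin_rpow_pos (hp : 1 < p) {t : ℝ} (ht : |t| < pPi p / 2) :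
    0 < 1 - |pSin p t| ^ p :=
  sub_pos.2 (rpow_lt_one (abs_nonneg _) (abs_pSin_lt_one hp ht) (by linarith))

lemma pCos_pos (hp : 1 < p) {t : ℝ} (ht : |t| < pPi p / 2) : 0 < pCos p t :=
  rpow_pos_of_pos (one_sub_abs_pSin_rpow_pos hp ht) _

lemma continuous_pCos (hp : 1 < p) : Continuous (pCos p) :=
  (continuous_const.sub ((lipschitzWith_pSin hp).continuous.abs.rpow_const
    fun _ => Or.inr (by linarith))).rpow_const fun _ => Or.inr (inv_nonneg.2 (by linarith))

lemma pCos_of_abs_eq_pPi_div_two (hp : 1 < p) {t : ℝ} (ht : |t| = pPi p / 2) : pCos p t = 0 := by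
  have hinv : p⁻¹ ≠ 0 := inv_ne_zero (by linarith)
  obtain rfl | rfl := eq_or_eq_neg_of_abs_eq ht <;>
    simp [pCos, pSin_neg hp, pSin_pPi_div_two hp, zero_rpow hinv]

lemma hasDerivAt_pSin (hp : 1 < p) {t : ℝ} (ht : |t| < pPi p / 2) :
    HasDerivAt (pSin p) (pCos p t) t := by
  have hpos := one_sub_abs_pSin_rpow_pos hp ht
  have hderiv := (hasDerivAt_pArcsin hp (abs_pSin_lt_one hp ht)).of_local_left_inverse
    (lipschitzWith_pSin hp).continuous.continuousAt (rpow_pos_of_pos hpos _).ne'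
    (Eventually.of_forall (pArcsin_pSin hp))
  rwa [rpow_neg hpos.le, inv_inv] at hderiv

-- The `p`-Laplace eigenvalue equation `(|u'| ^ (p - 2) u')' = -(p - 1) |u| ^ (p - 2) u`
-- for `u = sin_p`.
lemma hasDerivAt_pCos_rpow (hp : 1 < p) {t : ℝ} (ht : |t| < pPi p / 2) :
    HasDerivAt (fun s => pCos p s ^ (p - 1)) (-((p - 1) * sgnPow (p - 1) (pSin p t))) t := by
  have hpos := one_sub_abs_pSin_rpow_pos hp ht
  have hcos : 0 < pCos p t := pCos_pos hp ht
  have hbase : HasDerivAt (fun s => 1 - |pSin p s| ^ p)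
      (-(p * sgnPow (p - 1) (pSin p t) * pCos p t)) t :=
    ((hasDerivAt_abs_rpow_sgnPow hp (pSin p t)).comp t (hasDerivAt_pSin hp ht)).const_sub 1
  have hexp : p⁻¹ + (p⁻¹ - 1) + p⁻¹ * (p - 1 - 1) = 0 := by
    field_simp [(by linarith : p ≠ 0)]
    ring
  have hpow : pCos p t * (1 - |pSin p t| ^ p) ^ (p⁻¹ - 1) * pCos p t ^ (p - 1 - 1) = 1 := by
    simp only [pCos, ← rpow_mul hpos.le, ← rpow_add hpos]
    rw [hexp, rpow_zero]
  refine ((hbase.rpow_const (p := p⁻¹) (Or.inl hpos.ne')).rpow_const (p := p - 1)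
    (Or.inl hcos.ne')).congr_deriv ?_
  rw [← pCos]
  calc -(p * sgnPow (p - 1) (pSin p t) * pCos p t) * p⁻¹ * (1 - |pSin p t| ^ p) ^ (p⁻¹ - 1) *
        (p - 1) * pCos p t ^ (p - 1 - 1)
      = -((p - 1) * sgnPow (p - 1) (pSin p t)) * (p * p⁻¹) *
        (pCos p t * (1 - |pSin p t| ^ p) ^ (p⁻¹ - 1) * pCos p t ^ (p - 1 - 1)) := by ring
    _ = -((p - 1) * sgnPow (p - 1) (pSin p t)) := by
      rw [hpow, mul_inv_cancel₀ (by linarith), mul_one, mul_one]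

lemma hasDerivAt_pSin_mul_pCos_rpow (hp : 1 < p) {t : ℝ} (ht : |t| < pPi p / 2) :
    HasDerivAt (fun s => pSin p s * pCos p s ^ (p - 1))
      (pCos p t ^ p - (p - 1) * |pSin p t| ^ p) t := by
  refine ((hasDerivAt_pSin hp ht).mul (hasDerivAt_pCos_rpow hp ht)).congr_deriv ?_
  have hself := sgnPow_mul_self (q := p - 1) (by linarith) (pSin p t)
  have hpow : pCos p t ^ (p - 1) * pCos p t = pCos p t ^ p := by
    rw [← rpow_add_one (pCos_pos hp ht).ne', sub_add_cancel]
  rw [sub_add_cancel] at hself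
  linear_combination hpow - (p - 1) * hself

lemma integral_pCos_rpow (hp : 1 < p) :
    ∫ t in (-(pPi p / 2))..(pPi p / 2), pCos p t ^ p =
      (p - 1) * ∫ t in (-(pPi p / 2))..(pPi p / 2), |pSin p t| ^ p := by
  have hT : 0 < pPi p / 2 := half_pos (pPi_pos hp)
  have hsin : Continuous (pSin p) := (lipschitzWith_pSin hp).continuous
  have hcos_rpow : ∀ {r : ℝ}, 0 ≤ r → Continuous fun t => pCos p t ^ r := fun hr =>
    (continuous_pCos hp).rpow_const fun _ => Or.inr hr
  have hsin_rpow : Continuous fun t => (p - 1) * |pSin p t| ^ p :=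
    continuous_const.mul (hsin.abs.rpow_const fun _ => Or.inr (by linarith))
  have hflux : Continuous fun t => pSin p t * pCos p t ^ (p - 1) :=
    hsin.mul (hcos_rpow (by linarith))
  have hftc := intervalIntegral.integral_eq_sub_of_hasDerivAt_of_le (neg_lt_self hT).le
    hflux.continuousOn (fun t ht => hasDerivAt_pSin_mul_pCos_rpow hp (abs_lt.2 ht))
    (((hcos_rpow (by linarith)).sub hsin_rpow).intervalIntegrable _ _)
  have hboundary : ∀ t, |t| = pPi p / 2 → pSin p t * pCos p t ^ (p - 1) = 0 := fun t ht => by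
    rw [pCos_of_abs_eq_pPi_div_two hp ht, zero_rpow (by linarith), mul_zero]
  rw [hboundary _ (abs_of_pos hT), hboundary _ ((abs_neg _).trans (abs_of_pos hT)), sub_zero,
    intervalIntegral.integral_sub ((hcos_rpow (by linarith)).intervalIntegrable _ _)
      (hsin_rpow.intervalIntegrable _ _), sub_eq_zero] at hftc
  rw [hftc, intervalIntegral.integral_const_mul]

lemma integral_abs_deriv_pSin_rpow (hp : 1 < p) :
    ∫ t in (-(pPi p / 2))..(pPi p / 2), |deriv (pSin p) t| ^ p =
      (p - 1) * ∫ t in (-(pPi p / 2))..(pPi p / 2), |pSin p t| ^ p := by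
  rw [← integral_pCos_rpow hp]
  refine intervalIntegral.integral_congr_Ioo_of_le (by linarith [pPi_pos hp]) fun t ht => ?_
  have ht' : |t| < pPi p / 2 := abs_lt.2 ht
  simp only [(hasDerivAt_pSin hp ht').deriv, abs_of_pos (pCos_pos hp ht')]

/-- The generalized cotangent flux `|u'| ^ (p - 2) u' / (|u| ^ (p - 2) u)` of `u = sin_p`, a
solution of the Riccati equation `W' = -(p - 1) (1 + |W| ^ (p / (p - 1)))`. -/
noncomputable def pCotFlux (p t : ℝ) : ℝ := pCos p t ^ (p - 1) / sgnPow (p - 1) (pSin p t)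

lemma pCotFlux_neg (hp : 1 < p) (t : ℝ) : pCotFlux p (-t) = -pCotFlux p t := by
  rw [pCotFlux, pCotFlux, pCos, pCos, pSin_neg hp, abs_neg, sgnPow_neg, div_neg]

lemma pCotFlux_nonneg (hp : 1 < p) {t : ℝ} (ht : t ∈ Ioo 0 (pPi p / 2)) : 0 ≤ pCotFlux p t := by
  have hcos : 0 < pCos p t := pCos_pos hp ((abs_of_pos ht.1).trans_lt ht.2)
  have hsin : 0 < pSin p t := by simpa only [pSin_zero hp] using strictMono_pSin hp ht.1
  rw [pCotFlux, sgnPow_of_pos _ hsin]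
  positivity

lemma pSin_ne_zero (hp : 1 < p) {t : ℝ} (ht : t ≠ 0) : pSin p t ≠ 0 := by
  rw [← pSin_zero hp]
  exact (strictMono_pSin hp).injective.ne ht

lemma abs_pCotFlux_rpow {q : ℝ} (hpq : p.HolderConjugate q) {t : ℝ} (ht : |t| < pPi p / 2) :
    |pCotFlux p t| ^ q = pCos p t ^ p / |pSin p t| ^ p := by
  have hcos : 0 < pCos p t := pCos_pos hpq.lt ht
  rw [pCotFlux, abs_div, abs_sgnPow hpq.sub_one_ne_zero, abs_of_nonneg (by positivity),
    div_rpow (by positivity) (by positivity), ← rpow_mul hcos.le, ← rpow_mul (abs_nonneg _),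
    hpq.sub_one_mul_conj]

lemma hasDerivAt_pCotFlux {q : ℝ} (hpq : p.HolderConjugate q) {t : ℝ} (ht0 : t ≠ 0)
    (ht : |t| < pPi p / 2) :
    HasDerivAt (pCotFlux p) (-((p - 1) * (1 + |pCotFlux p t| ^ q))) t := by
  have hp : 1 < p := hpq.lt
  have hsin : 0 < |pSin p t| := abs_pos.2 (pSin_ne_zero hp ht0)
  have hsgn : sgnPow (p - 1) (pSin p t) ≠ 0 := by
    rw [← abs_ne_zero, abs_sgnPow hpq.sub_one_ne_zero]
    positivity
  have hsgn_sq : sgnPow (p - 1) (pSin p t) ^ 2 = |pSin p t| ^ (p - 1 - 1) * |pSin p t| ^ p := by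
    rw [← sq_abs, abs_sgnPow hpq.sub_one_ne_zero, sq, ← rpow_add hsin, ← rpow_add hsin]
    ring_nf
  have hcos_rpow : pCos p t ^ (p - 1) * pCos p t = pCos p t ^ p := by
    rw [← rpow_add_one (pCos_pos hp ht).ne', sub_add_cancel]
  refine ((hasDerivAt_pCos_rpow hp ht).div ((hasDerivAt_sgnPow (p - 1)
    (pSin_ne_zero hp ht0)).comp t (hasDerivAt_pSin hp ht)) hsgn).congr_deriv ?_
  rw [Function.comp_apply, abs_pCotFlux_rpow hpq ht, hsgn_sq, ← hcos_rpow]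
  field_simp
  linear_combination -(p - 1) * hsgn_sq

lemma hasDerivAt_mul_pCotFlux_comp {q : ℝ} (hpq : p.HolderConjugate q) {ω d s : ℝ} (hω : 0 < ω)
    (hs0 : ω * s + d ≠ 0) (hs : |ω * s + d| < pPi p / 2) :
    HasDerivAt (fun r => ω ^ (p - 1) * pCotFlux p (ω * r + d))
      (-((p - 1) * ω ^ p + (p - 1) * |ω ^ (p - 1) * pCotFlux p (ω * s + d)| ^ q)) s := by
  have hlin : HasDerivAt (fun r => ω * r + d) ω s := by
    simpa using ((hasDerivAt_id s).const_mul ω).add_const d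
  refine (((hasDerivAt_pCotFlux hpq hs0 hs).comp s hlin).const_mul
    (ω ^ (p - 1))).congr_deriv ?_
  have hω_rpow : ω ^ (p - 1) * ω = ω ^ p := by rw [← rpow_add_one hω.ne', sub_add_cancel]
  rw [abs_mul, mul_rpow (abs_nonneg _) (abs_nonneg _), abs_of_pos (rpow_pos_of_pos hω _),
    ← rpow_mul hω.le, hpq.sub_one_mul_conj, ← hω_rpow]
  ring

end GeneralizedTrigonometry

section AbsolutelyContinuous

variable {a b : ℝ}

lemma absolutelyContinuousOnInterval_comp_of_lipschitzOnWith {X Y : Type*} [PseudoMetricSpace X]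
    [PseudoMetricSpace Y] {f : ℝ → X} {g : X → Y} {s : Set X} {K : NNReal}
    (hg : LipschitzOnWith K g s) (hf : AbsolutelyContinuousOnInterval f a b)
    (hfs : MapsTo f (uIcc a b) s) : AbsolutelyContinuousOnInterval (g ∘ f) a b := by
  refine squeeze_zero' (Eventually.of_forall fun _ => Finset.sum_nonneg fun _ _ => dist_nonneg)
    ?_ (by simpa using Tendsto.const_mul (K : ℝ) hf)
  filter_upwards [mem_inf_of_right (mem_principal_self _)] with I hI
  rw [Finset.mul_sum]
  exact Finset.sum_le_sum fun i hi => hg.dist_le_mul _ (hfs (hI.1 i hi).1) _ (hfs (hI.1 i hi).2)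

lemma absolutelyContinuousOnInterval_abs_rpow {p : ℝ} (hp : 1 < p) {f : ℝ → ℝ}
    (hf : AbsolutelyContinuousOnInterval f a b) :
    AbsolutelyContinuousOnInterval (fun s => |f s| ^ p) a b := by
  obtain ⟨K, hK⟩ := (contDiff_norm_rpow (E := ℝ) hp).locallyLipschitz.locallyLipschitzOn
    |>.exists_lipschitzOnWith_of_compact (isCompact_uIcc.image_of_continuousOn hf.continuousOn)
  exact absolutelyContinuousOnInterval_comp_of_lipschitzOnWith hK hf (mapsTo_image f _)

lemma absolutelyContinuousOnInterval_of_hasDerivAt {f f' : ℝ → ℝ}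
    (hf : ∀ s ∈ uIcc a b, HasDerivAt f (f' s) s) (hf' : ContinuousOn f' (uIcc a b)) :
    AbsolutelyContinuousOnInterval f a b := by
  obtain ⟨C, hC⟩ := isCompact_uIcc.exists_bound_of_continuousOn hf'
  refine LipschitzOnWith.absolutelyContinuousOnInterval (K := C.toNNReal) <|
    (convex_uIcc a b).lipschitzOnWith_of_nnnorm_hasDerivWithin_le
      (fun s hs => (hf s hs).hasDerivWithinAt) fun s hs => ?_
  exact NNReal.le_toNNReal_of_coe_le (hC s hs)

end AbsolutelyContinuous

section Poincare

variable {p : ℝ} {a b : ℝ} {ψ : ℝ → ℝ}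

-- Young's inequality turns the Riccati inequality for `W` into the pointwise bound
-- `(W |ψ| ^ p)' + lam |ψ| ^ p ≤ |ψ'| ^ p`.
lemma mul_integral_abs_rpow_add_le_of_riccati {q lam : ℝ} (hpq : p.HolderConjugate q)
    (hab : a ≤ b) {W : ℝ → ℝ} (hW : AbsolutelyContinuousOnInterval W a b)
    (hriccati : ∀ s ∈ Icc a b, deriv W s ≤ -(lam + (p - 1) * |W s| ^ q))
    (hψ : AbsolutelyContinuousOnInterval ψ a b)
    (hψ' : IntervalIntegrable (fun s => |deriv ψ s| ^ p) volume a b) :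
    lam * (∫ s in a..b, |ψ s| ^ p) + (W b * |ψ b| ^ p - W a * |ψ a| ^ p) ≤
      ∫ s in a..b, |deriv ψ s| ^ p := by
  have hψp := absolutelyContinuousOnInterval_abs_rpow hpq.lt hψ
  have hint : IntervalIntegrable (fun s => lam * |ψ s| ^ p) volume a b :=
    hψp.continuousOn.intervalIntegrable.const_mul lam
  have hint' : IntervalIntegrable
      (fun s => deriv W s * |ψ s| ^ p + W s * deriv (fun r => |ψ r| ^ p) s) volume a b :=
    (hW.intervalIntegrable_deriv.mul_continuousOn hψp.continuousOn).add
      (hψp.intervalIntegrable_deriv.continuousOn_mul hW.continuousOn)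
  rw [← hW.integral_deriv_mul_eq_sub hψp, ← intervalIntegral.integral_const_mul,
    ← intervalIntegral.integral_add hint hint']
  refine intervalIntegral.integral_mono_ae_restrict hab (hint.add hint') hψ' ?_
  filter_upwards [ae_restrict_of_ae hψ.ae_differentiableAt, ae_restrict_mem measurableSet_Icc]
    with s hdiff hs
  have hderiv : deriv (fun r => |ψ r| ^ p) s = p * sgnPow (p - 1) (ψ s) * deriv ψ s :=
    ((hasDerivAt_abs_rpow_sgnPow hpq.lt (ψ s)).comp s
      (hdiff (Icc_subset_uIcc hs)).hasDerivAt).deriv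
  have hyoung := young_mul_sgnPow hpq (W s) (ψ s) (deriv ψ s)
  have hmul := mul_le_mul_of_nonneg_right (hriccati s hs) (by positivity : 0 ≤ |ψ s| ^ p)
  rw [hderiv]
  linear_combination hyoung + hmul

lemma mul_integral_abs_rpow_add_pCotFlux_le (hp : 1 < p) (hab : a ≤ b) {ω d : ℝ} (hω : 0 < ω)
    (hd : ∀ s ∈ Icc a b, ω * s + d ≠ 0 ∧ |ω * s + d| < pPi p / 2)
    (hψ : AbsolutelyContinuousOnInterval ψ a b)
    (hψ' : IntervalIntegrable (fun s => |deriv ψ s| ^ p) volume a b) :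
    (p - 1) * ω ^ p * (∫ s in a..b, |ψ s| ^ p) +
        ω ^ (p - 1) * (pCotFlux p (ω * b + d) * |ψ b| ^ p - pCotFlux p (ω * a + d) * |ψ a| ^ p) ≤
      ∫ s in a..b, |deriv ψ s| ^ p := by
  have hpq := HolderConjugate.conjExponent hp
  set W : ℝ → ℝ := fun s => ω ^ (p - 1) * pCotFlux p (ω * s + d) with hWdef
  have hW : ∀ s ∈ Icc a b,
      HasDerivAt W (-((p - 1) * ω ^ p + (p - 1) * |W s| ^ p.conjExponent)) s :=
    fun s hs => hasDerivAt_mul_pCotFlux_comp hpq hω (hd s hs).1 (hd s hs).2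
  have hWac : AbsolutelyContinuousOnInterval W a b := by
    have hWcont : ContinuousOn W (Icc a b) := HasDerivAt.continuousOn hW
    rw [← uIcc_of_le hab] at hW hWcont
    exact absolutelyContinuousOnInterval_of_hasDerivAt hW (continuousOn_const.add
      (continuousOn_const.mul (hWcont.abs.rpow_const fun _ _ => Or.inr hpq.symm.nonneg))).neg
  have hpicone := mul_integral_abs_rpow_add_le_of_riccati hpq hab hWac
    (fun s hs => (hW s hs).deriv.le) hψ hψ'
  simp only [hWdef] at hpicone
  linear_combination hpicone

lemma mul_integral_abs_rpow_le_of_apply_left_eq_zero (hp : 1 < p) (hab : a ≤ b) {ω : ℝ}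
    (hω : 0 < ω) (hωab : ω * (b - a) < pPi p / 2) (hψ : AbsolutelyContinuousOnInterval ψ a b)
    (hψ' : IntervalIntegrable (fun s => |deriv ψ s| ^ p) volume a b) (ha : ψ a = 0) :
    (p - 1) * ω ^ p * (∫ s in a..b, |ψ s| ^ p) ≤ ∫ s in a..b, |deriv ψ s| ^ p := by
  obtain ⟨δ, hδ, hδT⟩ := exists_between (sub_pos.2 hωab)
  have hmem : ∀ s ∈ Icc a b, ω * s + (δ - ω * a) ∈ Ioo 0 (pPi p / 2) := fun s hs =>
    ⟨by nlinarith [hs.1], by nlinarith [hs.2]⟩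
  have hpicone := mul_integral_abs_rpow_add_pCotFlux_le hp hab hω
    (fun s hs => ⟨(hmem s hs).1.ne', (abs_of_pos (hmem s hs).1).trans_lt (hmem s hs).2⟩) hψ hψ'
  have hflux := pCotFlux_nonneg hp (hmem b ⟨hab, le_rfl⟩)
  rw [ha, abs_zero, zero_rpow (by linarith), mul_zero, sub_zero] at hpicone
  exact (le_add_of_nonneg_right (by positivity)).trans hpicone

lemma mul_integral_abs_rpow_le_of_apply_right_eq_zero (hp : 1 < p) (hab : a ≤ b) {ω : ℝ}
    (hω : 0 < ω) (hωab : ω * (b - a) < pPi p / 2) (hψ : AbsolutelyContinuousOnInterval ψ a b)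
    (hψ' : IntervalIntegrable (fun s => |deriv ψ s| ^ p) volume a b) (hb : ψ b = 0) :
    (p - 1) * ω ^ p * (∫ s in a..b, |ψ s| ^ p) ≤ ∫ s in a..b, |deriv ψ s| ^ p := by
  obtain ⟨δ, hδ, hδT⟩ := exists_between (sub_pos.2 hωab)
  have hmem : ∀ s ∈ Icc a b, -(ω * s + (-δ - ω * b)) ∈ Ioo 0 (pPi p / 2) := fun s hs =>
    ⟨by nlinarith [hs.2], by nlinarith [hs.1]⟩
  have hpicone := mul_integral_abs_rpow_add_pCotFlux_le hp hab hω
    (fun s hs => ⟨neg_ne_zero.1 (hmem s hs).1.ne', by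
      rw [← abs_neg, abs_of_pos (hmem s hs).1]
      exact (hmem s hs).2⟩) hψ hψ'
  have hflux := pCotFlux_nonneg hp (hmem a ⟨le_rfl, hab⟩)
  rw [pCotFlux_neg hp] at hflux
  rw [hb, abs_zero, zero_rpow (by linarith), mul_zero, zero_sub, ← neg_mul] at hpicone
  exact (le_add_of_nonneg_right (by positivity)).trans hpicone

lemma mul_integral_abs_rpow_le_of_apply_eq_zero (hp : 1 < p) {c ω : ℝ} (hc : c ∈ Icc a b)
    (hω : 0 < ω) (hωac : ω * (c - a) < pPi p / 2) (hωcb : ω * (b - c) < pPi p / 2)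
    (hψ : AbsolutelyContinuousOnInterval ψ a b)
    (hψ' : IntervalIntegrable (fun s => |deriv ψ s| ^ p) volume a b) (hψc : ψ c = 0) :
    (p - 1) * ω ^ p * (∫ s in a..b, |ψ s| ^ p) ≤ ∫ s in a..b, |deriv ψ s| ^ p := by
  have hψp : IntervalIntegrable (fun s => |ψ s| ^ p) volume a b :=
    (absolutelyContinuousOnInterval_abs_rpow hp hψ).continuousOn.intervalIntegrable
  have hleft : uIcc a c ⊆ uIcc a b := uIcc_subset_uIcc_left (Icc_subset_uIcc hc)
  have hright : uIcc c b ⊆ uIcc a b := uIcc_subset_uIcc_right (Icc_subset_uIcc hc)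
  have hle_left := mul_integral_abs_rpow_le_of_apply_right_eq_zero hp hc.1 hω hωac
    (hψ.mono hleft) (hψ'.mono_set hleft) hψc
  have hle_right := mul_integral_abs_rpow_le_of_apply_left_eq_zero hp hc.2 hω hωcb
    (hψ.mono hright) (hψ'.mono_set hright) hψc
  rw [← intervalIntegral.integral_add_adjacent_intervals (hψp.mono_set hleft)
    (hψp.mono_set hright), ← intervalIntegral.integral_add_adjacent_intervals
    (hψ'.mono_set hleft) (hψ'.mono_set hright), mul_add]
  exact add_le_add hle_left hle_right

-- The flux is finite up to the far endpoint only for `ω` strictly below the critical value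
-- `pPi p / (b - a)`, so the sharp constant is reached in the limit.
lemma mul_integral_abs_rpow_le_of_apply_mid_eq_zero (hp : 1 < p) (hab : a < b)
    (hψ : AbsolutelyContinuousOnInterval ψ a b)
    (hψ' : IntervalIntegrable (fun s => |deriv ψ s| ^ p) volume a b)
    (hmid : ψ ((a + b) / 2) = 0) :
    (p - 1) * (pPi p / (b - a)) ^ p * (∫ s in a..b, |ψ s| ^ p) ≤
      ∫ s in a..b, |deriv ψ s| ^ p := by
  have hlim : Tendsto (fun ω : ℝ => (p - 1) * ω ^ p * ∫ s in a..b, |ψ s| ^ p)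
      (𝓝[<] (pPi p / (b - a)))
      (𝓝 ((p - 1) * (pPi p / (b - a)) ^ p * ∫ s in a..b, |ψ s| ^ p)) :=
    tendsto_nhdsWithin_of_tendsto_nhds <| ((tendsto_id.rpow_const
      (Or.inr (by linarith))).const_mul _).mul_const _
  refine le_of_tendsto hlim ?_
  filter_upwards [Ioo_mem_nhdsLT (div_pos (pPi_pos hp) (sub_pos.2 hab))] with ω hω
  have hωab : ω * (b - a) < pPi p := (lt_div_iff₀ (sub_pos.2 hab)).1 hω.2
  exact mul_integral_abs_rpow_le_of_apply_eq_zero hp ⟨by linarith, by linarith⟩ hω.1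
    (by linarith) (by linarith) hψ hψ' hmid

theorem mul_integral_abs_rpow_le_of_integral_sgnPow_eq_zero (hp : 1 < p) (hab : a < b)
    (hψ : AbsolutelyContinuousOnInterval ψ a b)
    (hψ' : IntervalIntegrable (fun s => |deriv ψ s| ^ p) volume a b)
    (hmean : ∫ s in a..b, sgnPow (p - 1) (ψ s) = 0) :
    (p - 1) * (pPi p / (b - a)) ^ p * (∫ s in a..b, |ψ s| ^ p) ≤
      ∫ s in a..b, |deriv ψ s| ^ p := by
  set c := ψ ((a + b) / 2)
  have hshift : AbsolutelyContinuousOnInterval (fun s => ψ s - c) a b :=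
    hψ.fun_sub (LipschitzWith.const c).lipschitzOnWith.absolutelyContinuousOnInterval
  have hcritical := mul_integral_abs_rpow_le_of_apply_mid_eq_zero hp hab hshift
    (by simpa only [deriv_sub_const] using hψ') (sub_self c)
  simp only [deriv_sub_const] at hcritical
  have hintegrable : ∀ {f : ℝ → ℝ}, ContinuousOn f (uIcc a b) → IntegrableOn f (Ioc a b) :=
    fun hf => hf.intervalIntegrable.1
  have hmin : ∫ s in a..b, |ψ s| ^ p ≤ ∫ s in a..b, |ψ s - c| ^ p := by
    rw [intervalIntegral.integral_of_le hab.le] at hmean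
    rw [intervalIntegral.integral_of_le hab.le, intervalIntegral.integral_of_le hab.le]
    exact integral_abs_rpow_le_integral_abs_sub_rpow hp
      (hintegrable (absolutelyContinuousOnInterval_abs_rpow hp hψ).continuousOn)
      (hintegrable ((continuous_sgnPow (sub_pos.2 hp)).comp_continuousOn hψ.continuousOn))
      (hintegrable (absolutelyContinuousOnInterval_abs_rpow hp hshift).continuousOn) hmean
  have hconst : 0 ≤ (p - 1) * (pPi p / (b - a)) ^ p :=
    mul_nonneg (sub_pos.2 hp).le
      (rpow_nonneg (div_pos (pPi_pos hp) (sub_pos.2 hab)).le p)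
  exact (mul_le_mul_of_nonneg_left hmin hconst).trans hcritical

end Poincare

section Rayleigh

lemma intervalIntegrable_abs_deriv_rpow_of_lipschitzOnWith {f : ℝ → ℝ} {K : NNReal} {p a b : ℝ}
    (hp : 0 ≤ p) (hab : a ≤ b) (hf : LipschitzOnWith K f (Icc a b)) :
    IntervalIntegrable (fun s => |deriv f s| ^ p) volume a b := by
  rw [intervalIntegrable_iff_integrableOn_Ioo_of_le hab]
  refine Measure.integrableOn_of_bounded (M := (K : ℝ) ^ p) measure_Ioo_lt_top.ne
    ((measurable_deriv f).abs.pow_const p).aestronglyMeasurable ?_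
  filter_upwards [ae_restrict_mem measurableSet_Ioo] with s hs
  rw [norm_of_nonneg (by positivity)]
  exact rpow_le_rpow (abs_nonneg _)
    (norm_deriv_le_of_lipschitzOn (Icc_mem_nhds hs.1 hs.2) hf) hp

lemma integral_abs_rpow_pos {f : ℝ → ℝ} {p a b : ℝ} (hp : 0 ≤ p) (hab : a < b)
    (hf : ContinuousOn f (Icc a b)) (hne : ∃ s ∈ Icc a b, f s ≠ 0) :
    0 < ∫ s in a..b, |f s| ^ p := by
  obtain ⟨c, hc, hfc⟩ := hne
  exact intervalIntegral.integral_pos hab (hf.abs.rpow_const fun _ _ => Or.inr hp)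
    (fun s _ => by positivity) ⟨c, hc, by positivity⟩

lemma integral_sgnPow_eq_zero_of_odd (q b : ℝ) {f : ℝ → ℝ} (hf : Function.Odd f) :
    ∫ s in (-b)..b, sgnPow q (f s) = 0 := by
  have hneg := intervalIntegral.integral_comp_neg (a := -b) (b := b) fun s => sgnPow q (f s)
  simp only [hf _, sgnPow_neg, neg_neg, intervalIntegral.integral_neg] at hneg
  exact self_eq_neg.1 hneg.symm

lemma integral_abs_deriv_pSin_comp_mul_rpow {p ω b : ℝ} (hp : 1 < p) (hω : 0 < ω)
    (hb : ω * b = pPi p / 2) :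
    ∫ s in (-b)..b, |deriv (fun r => pSin p (ω * r)) s| ^ p =
      (p - 1) * ω ^ p * ∫ s in (-b)..b, |pSin p (ω * s)| ^ p := by
  have hderiv : ∀ s, |deriv (fun r => pSin p (ω * r)) s| ^ p =
      ω ^ p * |deriv (pSin p) (ω * s)| ^ p := fun s => by
    rw [deriv_comp_mul_left, smul_eq_mul, abs_mul, abs_of_pos hω,
      mul_rpow hω.le (abs_nonneg _)]
  simp only [hderiv, intervalIntegral.integral_const_mul]
  rw [intervalIntegral.integral_comp_mul_left (fun t => |deriv (pSin p) t| ^ p) hω.ne',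
    intervalIntegral.integral_comp_mul_left (fun t => |pSin p t| ^ p) hω.ne', mul_neg, hb,
    integral_abs_deriv_pSin_rpow hp]
  simp only [smul_eq_mul]
  ring

lemma exists_rayleighQuotient_eq {p D : ℝ} (hp : 1 < p) (hD : 0 < D) : ∃ φ : ℝ → ℝ,
    (∃ K : NNReal, LipschitzOnWith K φ (Icc (-(D / 2)) (D / 2))) ∧
    ¬ (∀ s ∈ Icc (-(D / 2)) (D / 2), φ s = 0) ∧
    ∫ s in (-(D / 2))..(D / 2), sgnPow (p - 1) (φ s) = 0 ∧
    (p - 1) * (pPi p / D) ^ p = (∫ s in (-(D / 2))..(D / 2), |deriv φ s| ^ p) /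
      ∫ s in (-(D / 2))..(D / 2), |φ s| ^ p := by
  set ω : ℝ := pPi p / D with hωdef
  have hω : 0 < ω := div_pos (pPi_pos hp) hD
  have hωD : ω * (D / 2) = pPi p / 2 := by
    rw [hωdef]
    field_simp
  have hφ : LipschitzWith (1 * ‖ω‖₊) fun s => pSin p (ω * s) :=
    (lipschitzWith_pSin hp).comp (lipschitzWith_smul ω)
  have hne : ∃ s ∈ Icc (-(D / 2)) (D / 2), pSin p (ω * s) ≠ 0 :=
    ⟨D / 2, ⟨by linarith, le_rfl⟩, by simp [hωD, pSin_pPi_div_two hp]⟩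
  refine ⟨fun s => pSin p (ω * s), ⟨_, hφ.lipschitzOnWith⟩, by push Not; exact hne,
    integral_sgnPow_eq_zero_of_odd _ _ fun s => by rw [mul_neg, pSin_neg hp], ?_⟩
  rw [integral_abs_deriv_pSin_comp_mul_rpow hp hω hωD, mul_div_cancel_right₀]
  exact (integral_abs_rpow_pos (by linarith) (by linarith) hφ.continuous.continuousOn hne).ne'

end Rayleigh
/-- **Sharp one-dimensional `p`-Poincaré–Wirtinger constant.**
For `1 < p < ∞` and `D > 0`, with `π_p = 2π / (p sin(π/p))`, one has
`μ_p(0, D) = (p - 1) (π_p / D)^p`. -/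
theorem rayleighNeumann_zero_eq (p D : ℝ) (hp : 1 < p) (hD : 0 < D) :
    rayleighNeumann p 0 D
      = (p - 1) * ((2 * Real.pi / (p * Real.sin (Real.pi / p))) / D) ^ p := by
  change rayleighNeumann p 0 D = (p - 1) * (pPi p / D) ^ p
  have hsymm : -(D / 2) < D / 2 := by linarith
  rw [rayleighNeumann]
  simp only [neg_zero, zero_mul, zero_div, Real.exp_zero, mul_one]
  refine IsLeast.csInf_eq ⟨exists_rayleighQuotient_eq hp hD, ?_⟩
  rintro _ ⟨φ, ⟨K, hφ⟩, hne, hmean, rfl⟩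
  have hac : AbsolutelyContinuousOnInterval φ (-(D / 2)) (D / 2) :=
    LipschitzOnWith.absolutelyContinuousOnInterval (by rwa [uIcc_of_le hsymm.le])
  have hpoincare := mul_integral_abs_rpow_le_of_integral_sgnPow_eq_zero hp hsymm hac
    (intervalIntegrable_abs_deriv_rpow_of_lipschitzOnWith (by linarith) hsymm.le hφ) hmean
  rw [sub_neg_eq_add, add_halves] at hpoincare
  push Not at hne
  exact (le_div_iff₀ (integral_abs_rpow_pos (by linarith) hsymm hφ.continuousOn hne)).2 hpoincare
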